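/- arXiv:0903.3524 — 5 statements merged into one kernel-verified Lean document; each statement's English description precedes it below -/
import Mathlib

section
/- Let g be a polynomial in two variables x, y with real coefficients, and let a < b, c < d be real numbers. Assume: (i) for every x₀ ∈ [a,b], the univariate polynomial y ↦ g(x₀,y) is not identically zero; (ii) g(x,c) ≠ 0 and g(x,d) ≠ 0 for all x ∈ [a,b]; (iii) there is no point (x,y) ∈ (a,b) × (c,d) with g(x,y) = 0 and ∂g/∂y(x,y) = 0. Then there exist an integer k ≥ 0 and continuous functions θ₁, …, θ_k : (a,b) → (c,d) with θ₁(x) < θ₂(x) < ⋯ < θ_k(x) for all x ∈ (a,b), such that {(x,y) ∈ (a,b) × (c,d) : g(x,y) = 0} is exactly the union of the graphs of θ₁, …, θ_k; in particular, for every x ∈ (a,b) the polynomial g(x,·) has exactly k roots in (c,d), and each of them is a simple root. -/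
open MvPolynomial

open Filter Topology Set

lemma hasDerivAt_eval_snd (g : MvPolynomial (Fin 2) ℝ) (x y : ℝ) :
    HasDerivAt (fun t : ℝ => eval ![x, t] g) (eval ![x, y] (pderiv 1 g)) y := by
  induction g using MvPolynomial.induction_on with
  | C r => simpa using hasDerivAt_const y r
  | add p q hp hq => simpa using hp.fun_add hq
  | mul_X p i hp =>
    have hX : HasDerivAt (fun t : ℝ => (![x, t] : Fin 2 → ℝ) i)
        (eval ![x, y] (pderiv 1 (X i : MvPolynomial (Fin 2) ℝ))) y := by
      fin_cases i
      · simpa [pderiv_X] using hasDerivAt_const y x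
      · simpa [pderiv_X] using hasDerivAt_id' y
    have h := hp.mul hX
    simp only [Derivation.leibniz, smul_eq_mul, map_add, map_mul, eval_X]
    refine (h.congr_deriv (by ring)).congr_of_eventuallyEq ?_
    exact Eventually.of_forall fun t => by simp

lemma continuous_eval_pair (g : MvPolynomial (Fin 2) ℝ) :
    Continuous fun p : ℝ × ℝ => eval ![p.1, p.2] g := by
  refine (MvPolynomial.continuous_eval g).comp (continuous_pi fun i => ?_)
  fin_cases i
  · exact continuous_fst
  · exact continuous_snd

lemma finite_fiber_zeros (g : MvPolynomial (Fin 2) ℝ) (x : ℝ)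
    (hx : ∃ y : ℝ, eval ![x, y] g ≠ 0) : {y : ℝ | eval ![x, y] g = 0}.Finite := by
  let p : Polynomial ℝ := aeval ![Polynomial.C x, Polynomial.X] g
  have hp (y : ℝ) : p.eval y = eval ![x, y] g := by
    have h : (Polynomial.evalRingHom y).comp
        (aeval (R := ℝ) ![Polynomial.C x, Polynomial.X]).toRingHom = eval ![x, y] := by
      refine MvPolynomial.ringHom_ext (fun r => by simp) fun i => ?_
      fin_cases i <;> simp
    exact congrArg (fun φ : MvPolynomial (Fin 2) ℝ →+* ℝ => φ g) h
  obtain ⟨y, hy⟩ := hx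
  have hp0 : p ≠ 0 := fun h => hy (by rw [← hp, h, Polynomial.eval_zero])
  refine (Polynomial.finite_setOfPred_isRoot hp0).subset fun z hz => ?_
  exact (hp z).trans hz

section ImplicitRoots

variable {F G : ℝ → ℝ → ℝ}

lemma eventually_existsUnique_root_of_pos
    (hF : Continuous fun p : ℝ × ℝ => F p.1 p.2) (hG : Continuous fun p : ℝ × ℝ => G p.1 p.2)
    (hFG : ∀ x y, HasDerivAt (F x) (G x y) y) {x₀ y₀ : ℝ} (h₀ : F x₀ y₀ = 0)
    (hpos : 0 < G x₀ y₀) :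
    ∀ᶠ δ in 𝓝[>] (0 : ℝ), ∀ᶠ x in 𝓝 x₀, ∃! y, |y - y₀| < δ ∧ F x y = 0 := by
  have hev : ∀ᶠ p : ℝ × ℝ in 𝓝 (x₀, y₀), 0 < G p.1 p.2 :=
    hG.continuousAt.eventually (lt_mem_nhds hpos)
  obtain ⟨r, hr, hball⟩ := Metric.eventually_nhds_iff.1 hev
  have hmono {x δ : ℝ} (hx : dist x x₀ < r) (hδ : δ < r) :
      StrictMonoOn (F x) (Icc (y₀ - δ) (y₀ + δ)) := by
    refine strictMonoOn_of_deriv_pos (convex_Icc _ _)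
      (fun y _ => (hFG x y).continuousAt.continuousWithinAt) fun y hy => ?_
    rw [interior_Icc] at hy
    rw [(hFG x y).deriv]
    refine hball (y := (x, y)) (max_lt hx ?_)
    rw [Real.dist_eq, abs_lt]
    constructor <;> linarith [hy.1, hy.2]
  filter_upwards [Ioo_mem_nhdsGT hr] with δ hδ
  have hx₀ := hmono (x := x₀) (by simpa using hr) hδ.2
  have hlo : F x₀ (y₀ - δ) < 0 := by
    rw [← h₀]
    exact hx₀ ⟨by linarith, by linarith [hδ.1]⟩ ⟨by linarith [hδ.1], by linarith [hδ.1]⟩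
      (by linarith [hδ.1])
  have hhi : 0 < F x₀ (y₀ + δ) := by
    rw [← h₀]
    exact hx₀ ⟨by linarith [hδ.1], by linarith [hδ.1]⟩ ⟨by linarith [hδ.1], by linarith⟩
      (by linarith [hδ.1])
  have hcont (y : ℝ) : Continuous fun x => F x y :=
    hF.comp (continuous_id.prodMk continuous_const)
  filter_upwards [(hcont _).continuousAt.eventually (gt_mem_nhds hlo),
    (hcont _).continuousAt.eventually (lt_mem_nhds hhi), Metric.ball_mem_nhds x₀ hr]
    with x hxlo hxhi hx
  obtain ⟨y, hy, hFy⟩ := intermediate_value_Ioo (f := F x) (by linarith [hδ.1])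
    (fun y _ => (hFG x y).continuousAt.continuousWithinAt) (⟨hxlo, hxhi⟩ : (0 : ℝ) ∈ Ioo _ _)
  refine ⟨y, ⟨abs_lt.2 ⟨by linarith [hy.1], by linarith [hy.2]⟩, hFy⟩, ?_⟩
  rintro z ⟨hz, hFz⟩
  obtain ⟨hz₁, hz₂⟩ := abs_lt.1 hz
  exact (hmono hx hδ.2).injOn ⟨by linarith, by linarith⟩ (Ioo_subset_Icc_self hy)
    (hFz.trans hFy.symm)

lemma eventually_existsUnique_root
    (hF : Continuous fun p : ℝ × ℝ => F p.1 p.2) (hG : Continuous fun p : ℝ × ℝ => G p.1 p.2)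
    (hFG : ∀ x y, HasDerivAt (F x) (G x y) y) {x₀ y₀ : ℝ} (h₀ : F x₀ y₀ = 0)
    (hne : G x₀ y₀ ≠ 0) :
    ∀ᶠ δ in 𝓝[>] (0 : ℝ), ∀ᶠ x in 𝓝 x₀, ∃! y, |y - y₀| < δ ∧ F x y = 0 := by
  rcases hne.lt_or_gt with h | h
  · simpa using eventually_existsUnique_root_of_pos (F := fun x y => -F x y)
      (G := fun x y => -G x y) hF.neg hG.neg (fun x y => (hFG x y).neg) (x₀ := x₀) (y₀ := y₀)
      (by simp [h₀]) (by simpa using h)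
  · exact eventually_existsUnique_root_of_pos hF hG hFG h₀ h

/-- Simple roots in a compact interval, none at the endpoints, persist under a small change of
the parameter, and no new roots appear. -/
lemma eventually_exists_root_enumeration
    (hF : Continuous fun p : ℝ × ℝ => F p.1 p.2) (hG : Continuous fun p : ℝ × ℝ => G p.1 p.2)
    (hFG : ∀ x y, HasDerivAt (F x) (G x y) y) {c d x₀ ε : ℝ} (hε : 0 < ε)
    {k : ℕ} {r : Fin k → ℝ} (hr : StrictMono r) (hrcd : ∀ i, r i ∈ Ioo c d)
    (hroot : ∀ y ∈ Icc c d, F x₀ y = 0 ↔ ∃ i, y = r i) (hsimple : ∀ i, G x₀ (r i) ≠ 0) :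
    ∀ᶠ x in 𝓝 x₀, ∃ s : Fin k → ℝ, StrictMono s ∧ (∀ i, |s i - r i| < ε) ∧
      (∀ i, s i ∈ Ioo c d) ∧ ∀ y ∈ Icc c d, F x y = 0 ↔ ∃ i, y = s i := by
  have hsmall {t : ℝ} (ht : 0 < t) : ∀ᶠ δ in 𝓝[>] (0 : ℝ), δ < t :=
    (eventually_lt_nhds ht).filter_mono nhdsWithin_le_nhds
  have huniq : ∀ᶠ δ in 𝓝[>] (0 : ℝ), ∀ i, ∀ᶠ x in 𝓝 x₀, ∃! y, |y - r i| < δ ∧ F x y = 0 :=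
    eventually_all.2 fun i => eventually_existsUnique_root hF hG hFG
      ((hroot _ (Ioo_subset_Icc_self (hrcd i))).2 ⟨i, rfl⟩) (hsimple i)
  have hsep : ∀ᶠ δ in 𝓝[>] (0 : ℝ), ∀ i j, i < j → δ < (r j - r i) / 2 := by
    refine eventually_all.2 fun i => eventually_all.2 fun j => ?_
    by_cases hij : i < j
    · filter_upwards [hsmall (half_pos (sub_pos.2 (hr hij)))] with δ hδ _ using hδ
    · exact Eventually.of_forall fun δ h => absurd h hij
  have hin : ∀ᶠ δ in 𝓝[>] (0 : ℝ), ∀ i, δ < r i - c ∧ δ < d - r i :=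
    eventually_all.2 fun i =>
      (hsmall (sub_pos.2 (hrcd i).1)).and (hsmall (sub_pos.2 (hrcd i).2))
  obtain ⟨δ, hδuniq, hδsep, hδin, hδε, hδ⟩ :=
    (huniq.and (hsep.and (hin.and ((hsmall hε).and self_mem_nhdsWithin)))).exists
  have hδ : 0 < δ := hδ
  let K : Set ℝ := Icc c d \ ⋃ i, Metric.ball (r i) δ
  have hK : IsCompact K := isCompact_Icc.diff (isOpen_iUnion fun i => Metric.isOpen_ball)
  have haway : ∀ᶠ x in 𝓝 x₀, ∀ y ∈ K, F x y ≠ 0 := by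
    refine hK.eventually_forall_of_forall_eventually fun y hy => ?_
    refine hF.continuousAt.eventually_ne fun h => ?_
    obtain ⟨i, rfl⟩ := (hroot y hy.1).1 h
    exact hy.2 (mem_iUnion.2 ⟨i, Metric.mem_ball_self hδ⟩)
  filter_upwards [eventually_all.2 hδuniq, haway] with x hx hxK
  choose s hs hsuniq using hx
  refine ⟨s, fun i j hij => ?_, fun i => (hs i).1.trans hδε, fun i => ?_, fun y hy =>
    ⟨fun hFy => ?_, ?_⟩⟩
  · have hi := abs_lt.1 (hs i).1
    have hj := abs_lt.1 (hs j).1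
    linarith [hδsep i j hij, hi.2, hj.1]
  · have hi := abs_lt.1 (hs i).1
    constructor <;> linarith [hi.1, hi.2, (hδin i).1, (hδin i).2]
  · by_contra! hne
    refine hxK y ⟨hy, fun hmem => ?_⟩ hFy
    obtain ⟨i, hi⟩ := mem_iUnion.1 hmem
    exact hne i (hsuniq i y ⟨by simpa [Real.dist_eq] using hi, hFy⟩)
  · rintro ⟨i, rfl⟩
    exact (hs i).2

end ImplicitRoots

lemma Finset.mem_iff_exists_eq_orderEmbOfFin {α : Type*} [LinearOrder α] {S : Finset α} {k : ℕ}
    (hk : S.card = k) {y : α} : y ∈ S ↔ ∃ i, y = S.orderEmbOfFin hk i := by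
  have h : y ∈ Set.range (S.orderEmbOfFin hk) ↔ y ∈ S := by
    rw [Finset.range_orderEmbOfFin, Finset.mem_coe]
  rw [← h]
  exact exists_congr fun i => eq_comm

lemma Finset.card_eq_of_strictMono_enumeration {α : Type*} [LinearOrder α] {S : Finset α} {k : ℕ}
    {s : Fin k → α} (hs : StrictMono s) (hS : ∀ y, y ∈ S ↔ ∃ i, y = s i) : S.card = k := by
  have h : S = Finset.univ.map ⟨s, hs.injective⟩ := by
    ext y
    simp [hS, eq_comm]
  simp [h]

/-- Inside a segregating box `[a,b] × [c,d]` whose open interior contains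
no x-critical point of the squarefree-type curve `g(x,y) = 0` (and such that the fibers
`g(x₀,·)` are not identically zero), the curve is a disjoint union of `k` ordered graphs of
continuous functions `θ₁ < ⋯ < θ_k : (a,b) → (c,d)`, and all the roots are simple. -/
theorem delineable_in_segregating_box
    (g : MvPolynomial (Fin 2) ℝ) (a b c d : ℝ) (hab : a < b) (hcd : c < d)
    (hfiber : ∀ x₀ ∈ Set.Icc a b, ∃ y : ℝ, eval ![x₀, y] g ≠ 0)
    (hseg : ∀ x ∈ Set.Icc a b, eval ![x, c] g ≠ 0 ∧ eval ![x, d] g ≠ 0)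
    (hcrit : ∀ x ∈ Set.Ioo a b, ∀ y ∈ Set.Ioo c d,
      ¬(eval ![x, y] g = 0 ∧ eval ![x, y] (pderiv 1 g) = 0)) :
    ∃ (k : ℕ) (θ : Fin k → ℝ → ℝ),
      (∀ i, ContinuousOn (θ i) (Set.Ioo a b)) ∧
      (∀ i, ∀ x ∈ Set.Ioo a b, θ i x ∈ Set.Ioo c d) ∧
      (∀ x ∈ Set.Ioo a b, StrictMono fun i => θ i x) ∧
      (∀ x ∈ Set.Ioo a b, ∀ y ∈ Set.Ioo c d,
        (eval ![x, y] g = 0 ↔ ∃ i, y = θ i x)) ∧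
      (∀ i, ∀ x ∈ Set.Ioo a b, eval ![x, θ i x] (pderiv 1 g) ≠ 0) := by
  have hF := continuous_eval_pair g
  have hG := continuous_eval_pair (pderiv 1 g)
  have hFG := hasDerivAt_eval_snd g
  have hfin : ∀ x, ∃ S : Finset ℝ, x ∈ Ioo a b →
      ∀ y, y ∈ S ↔ y ∈ Ioo c d ∧ eval ![x, y] g = 0 := by
    intro x
    by_cases hx : x ∈ Ioo a b
    · refine ⟨((finite_fiber_zeros g x (hfiber x (Ioo_subset_Icc_self hx))).subset
        (inter_subset_right (s := Ioo c d))).toFinset, fun _ y => ?_⟩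
      simp
    · exact ⟨∅, fun h => absurd h hx⟩
  choose S hS using hfin
  have hroot : ∀ x ∈ Ioo a b, ∀ y ∈ Icc c d, eval ![x, y] g = 0 ↔ y ∈ S x := by
    intro x hx y hy
    rw [hS x hx]
    refine ⟨fun h => ⟨⟨hy.1.lt_of_ne ?_, hy.2.lt_of_ne ?_⟩, h⟩, And.right⟩
    · rintro rfl
      exact (hseg x (Ioo_subset_Icc_self hx)).1 h
    · rintro rfl
      exact (hseg x (Ioo_subset_Icc_self hx)).2 h
  have hloc : ∀ x₀ ∈ Ioo a b, ∀ k, ∀ hk : (S x₀).card = k, ∀ ε > 0, ∀ᶠ x in 𝓝 x₀,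
      ∃ h : (S x).card = k, ∀ i,
        |(S x).orderEmbOfFin h i - (S x₀).orderEmbOfFin hk i| < ε := by
    intro x₀ hx₀ k hk ε hε
    have hmem i := (hS x₀ hx₀ _).1 ((S x₀).orderEmbOfFin_mem hk i)
    filter_upwards [Ioo_mem_nhds hx₀.1 hx₀.2, eventually_exists_root_enumeration hF hG hFG hε
      ((S x₀).orderEmbOfFin hk).strictMono (fun i => (hmem i).1)
      (fun y hy => (hroot x₀ hx₀ y hy).trans (Finset.mem_iff_exists_eq_orderEmbOfFin hk))
      (fun i h => hcrit x₀ hx₀ _ (hmem i).1 ⟨(hmem i).2, h⟩)] with x hx hs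
    obtain ⟨s, hsmono, hsε, hscd, hsroot⟩ := hs
    have hSs (y : ℝ) : y ∈ S x ↔ ∃ i, y = s i := by
      constructor
      · intro hy
        obtain ⟨hycd, hy0⟩ := (hS x hx y).1 hy
        exact (hsroot y (Ioo_subset_Icc_self hycd)).1 hy0
      · rintro ⟨i, rfl⟩
        have hi := Ioo_subset_Icc_self (hscd i)
        exact (hroot x hx _ hi).1 ((hsroot _ hi).2 ⟨i, rfl⟩)
    have hcard := Finset.card_eq_of_strictMono_enumeration hsmono hSs
    refine ⟨hcard, fun i => ?_⟩
    rw [← Finset.orderEmbOfFin_unique hcard (fun i => (hSs _).2 ⟨i, rfl⟩) hsmono]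
    exact hsε i
  have hcont : ContinuousOn (fun x => (S x).card) (Ioo a b) := fun x hx =>
    (continuousAt_const.congr ((hloc x hx _ rfl 1 one_pos).mono
      fun _ h => h.1.symm)).continuousWithinAt
  obtain ⟨k, hk⟩ : ∃ k, ∀ x ∈ Ioo a b, (S x).card = k := by
    obtain ⟨m, hm⟩ := nonempty_Ioo.2 hab
    exact ⟨_, fun x hx => isPreconnected_Ioo.constant hcont hx hm⟩
  let θ : Fin k → ℝ → ℝ := fun i x =>
    if h : (S x).card = k then (S x).orderEmbOfFin h i else 0
  have hθ {x : ℝ} (h : (S x).card = k) (i : Fin k) : θ i x = (S x).orderEmbOfFin h i :=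
    dif_pos h
  have hθmem (i : Fin k) (x : ℝ) (hx : x ∈ Ioo a b) :
      θ i x ∈ Ioo c d ∧ eval ![x, θ i x] g = 0 := by
    rw [hθ (hk x hx)]
    exact (hS x hx _).1 (Finset.orderEmbOfFin_mem _ _ _)
  refine ⟨k, θ, fun i x₀ hx₀ => ContinuousAt.continuousWithinAt ?_,
    fun i x hx => (hθmem i x hx).1, fun x hx i j hij => ?_, fun x hx y hy => ?_,
    fun i x hx h => hcrit x hx _ (hθmem i x hx).1 ⟨(hθmem i x hx).2, h⟩⟩
  · refine Metric.tendsto_nhds.2 fun ε hε => ?_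
    filter_upwards [hloc x₀ hx₀ k (hk x₀ hx₀) ε hε] with x ⟨h, hx⟩
    rw [hθ h, hθ (hk x₀ hx₀), Real.dist_eq]
    exact hx i
  · simpa only [hθ (hk x hx)] using ((S x).orderEmbOfFin (hk x hx)).strictMono hij
  · rw [hroot x hx y (Ioo_subset_Icc_self hy),
      Finset.mem_iff_exists_eq_orderEmbOfFin (hk x hx)]
    simp only [hθ (hk x hx)]
end

section
/- Let g be a polynomial in two variables x, y with real coefficients, and let a < b, c < d be real numbers. Assume: (i) for every x₀ ∈ [a,b], the univariate polynomial y ↦ g(x₀,y) is not identically zero; (ii) g(x,c) ≠ 0 and g(x,d) ≠ 0 for all x ∈ [a,b]; (iii) there is no point (x,y) ∈ [a,b] × (c,d) with g(x,y) = 0 and ∂g/∂y(x,y) = 0. Then the number of real roots of g(a,·) in the interval (c,d), the number of real roots of g(b,·) in the interval (c,d), and the number of connected components of the set {(x,y) ∈ (a,b) × (c,d) : g(x,y) = 0} are all equal (and all these roots are simple). -/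
open MvPolynomial

open Set Filter Topology

theorem MvPolynomial.hasDerivAt_eval_pderiv_one (g : MvPolynomial (Fin 2) ℝ) (x y : ℝ) :
    HasDerivAt (fun t => eval ![x, t] g) (eval ![x, y] (pderiv 1 g)) y := by
  induction g using MvPolynomial.induction_on with
  | C r => simpa using hasDerivAt_const y r
  | add p q hp hq => simpa [Pi.add_def] using hp.add hq
  | mul_X p i hp =>
    have hX : HasDerivAt (fun t => eval ![x, t] (X i : MvPolynomial (Fin 2) ℝ))
        (eval ![x, y] (pderiv 1 (X i : MvPolynomial (Fin 2) ℝ))) y := by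
      fin_cases i
      · simpa [pderiv_X] using hasDerivAt_const y x
      · simpa [pderiv_X] using hasDerivAt_id' y
    simp only [Derivation.leibniz, smul_eq_mul, map_add, map_mul]
    refine (hp.mul hX).congr_deriv ?_
    ring

/-- If a locally injective map onto a preconnected space has a continuous section through every
point, then each fiber meets every connected component of the total space exactly once. -/
theorem Nat.card_fiber_eq_card_connectedComponents {E X : Type*} [TopologicalSpace E]
    [TopologicalSpace X] [T2Space E] [PreconnectedSpace X] {p : E → X} (hp : Continuous p)
    (hinj : IsLocallyInjective p)
    (hsec : ∀ e, ∃ σ : X → E, Continuous σ ∧ (∀ x, p (σ x) = x) ∧ σ (p e) = e) (x : X) :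
    Nat.card (p ⁻¹' {x}) = Nat.card (ConnectedComponents E) := by
  refine Nat.card_congr (Equiv.ofBijective
    (fun e : p ⁻¹' {x} => ConnectedComponents.mk (e : E)) ⟨?_, ?_⟩)
  · rintro ⟨e₁, rfl⟩ ⟨e₂, he₂⟩ h
    obtain ⟨σ, hσ, hpσ, hσe⟩ := hsec e₁
    have hclopen : IsClopen {e | σ (p e) = e} :=
      ⟨isClosed_eq (hσ.comp hp) continuous_id,
        hinj.isOpen_eqLocus (g₁ := σ ∘ p) (g₂ := id) (hσ.comp hp) continuous_id
          (_root_.funext fun e => hpσ (p e))⟩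
    have hmem : e₂ ∈ connectedComponent e₁ := ConnectedComponents.coe_eq_coe'.1 h.symm
    have h₂ : σ (p e₂) = e₂ := hclopen.connectedComponent_subset hσe hmem
    rw [he₂, hσe] at h₂
    exact Subtype.ext h₂
  · intro C
    obtain ⟨e, rfl⟩ := ConnectedComponents.surjective_coe C
    obtain ⟨σ, hσ, hpσ, hσe⟩ := hsec e
    refine ⟨⟨σ x, hpσ x⟩, ConnectedComponents.coe_eq_coe'.2 ?_⟩
    exact (isPreconnected_range hσ).subset_connectedComponent ⟨p e, hσe⟩ ⟨x, rfl⟩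

/-- The part of the curve `F = 0` in the strip `S × (c, d)`. -/
abbrev CurveOver (F : ℝ → ℝ → ℝ) (c d : ℝ) (S : Set ℝ) : Type :=
  {p : ℝ × ℝ // p.1 ∈ S ∧ p.2 ∈ Ioo c d ∧ F p.1 p.2 = 0}

namespace CurveOver

variable {F F' : ℝ → ℝ → ℝ} {a b c d : ℝ} {S : Set ℝ}

/-- The projection of the curve to the `x`-axis. -/
def proj (p : CurveOver F c d S) : S := ⟨p.1.1, p.2.1⟩

theorem continuous_proj : Continuous (proj : CurveOver F c d S → S) := by
  unfold proj
  fun_prop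

theorem card_fiber (x : S) :
    Nat.card ((proj : CurveOver F c d S → S) ⁻¹' {x}) = {y ∈ Ioo c d | F x y = 0}.ncard := by
  rw [← Nat.card_coe_set_eq]
  refine Nat.card_congr
    { toFun := fun e => ⟨e.1.1.2, e.1.2.2.1, ?_⟩
      invFun := fun y => ⟨⟨(x, y), x.2, y.2⟩, rfl⟩
      left_inv := ?_
      right_inv := fun y => rfl }
  · obtain ⟨e, rfl⟩ := e
    exact e.2.2.2
  · rintro ⟨e, rfl⟩
    rfl

theorem exists_injOn_ball (hF' : Continuous fun p : ℝ × ℝ => F' p.1 p.2)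
    (hderiv : ∀ x y, HasDerivAt (F x) (F' x y) y) {x₀ y₀ : ℝ} (h : F' x₀ y₀ ≠ 0) :
    ∃ ε > 0, ∀ x ∈ Metric.ball x₀ ε, InjOn (F x) (Metric.ball y₀ ε) := by
  obtain ⟨ε, hε, hball⟩ := Metric.mem_nhds_iff.1
    ((hF'.continuousAt (x := (x₀, y₀))).eventually_ne h)
  refine ⟨ε, hε, fun x hx => ?_⟩
  have key : ∀ y₁ ∈ Metric.ball y₀ ε, ∀ y₂ ∈ Metric.ball y₀ ε, y₁ < y₂ → F x y₁ ≠ F x y₂ := by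
    intro y₁ h₁ y₂ h₂ hlt heq
    obtain ⟨t, ht, ht0⟩ := exists_hasDerivAt_eq_zero hlt
      (fun t _ => (hderiv x t).continuousAt.continuousWithinAt) heq (fun t _ => hderiv x t)
    have htb : t ∈ Metric.ball y₀ ε :=
      (convex_ball y₀ ε).ordConnected.out h₁ h₂ (Ioo_subset_Icc_self ht)
    exact hball (show (x, t) ∈ Metric.ball (x₀, y₀) ε by
      rw [← ball_prod_same]; exact ⟨hx, htb⟩) ht0
  intro y₁ h₁ y₂ h₂ heq
  by_contra hne
  rcases lt_or_gt_of_ne hne with hlt | hlt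
  · exact key _ h₁ _ h₂ hlt heq
  · exact key _ h₂ _ h₁ hlt heq.symm

theorem isLocallyInjective_proj (hF' : Continuous fun p : ℝ × ℝ => F' p.1 p.2)
    (hderiv : ∀ x y, HasDerivAt (F x) (F' x y) y)
    (hcrit : ∀ x ∈ S, ∀ y ∈ Ioo c d, F x y = 0 → F' x y ≠ 0) :
    IsLocallyInjective (proj : CurveOver F c d S → S) := by
  rintro ⟨⟨x₀, y₀⟩, hx₀, hy₀, h0⟩
  obtain ⟨ε, hε, hinj⟩ := exists_injOn_ball hF' hderiv (hcrit x₀ hx₀ y₀ hy₀ h0)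
  refine ⟨Subtype.val ⁻¹' Metric.ball (x₀, y₀) ε,
    Metric.isOpen_ball.preimage continuous_subtype_val, Metric.mem_ball_self hε, ?_⟩
  rintro ⟨⟨x₁, y₁⟩, hx₁, hy₁, h1⟩ hb₁ ⟨⟨x₂, y₂⟩, hx₂, hy₂, h2⟩ hb₂ heq
  obtain rfl : x₁ = x₂ := congrArg Subtype.val heq
  rw [mem_preimage, ← ball_prod_same] at hb₁ hb₂
  obtain rfl : y₁ = y₂ := hinj x₁ hb₁.1 hb₁.2 hb₂.2 (h1.trans h2.symm)
  rfl

theorem isOpenMap_proj (hF : Continuous fun p : ℝ × ℝ => F p.1 p.2)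
    (hF' : Continuous fun p : ℝ × ℝ => F' p.1 p.2)
    (hderiv : ∀ x y, HasDerivAt (F x) (F' x y) y)
    (hcrit : ∀ x ∈ S, ∀ y ∈ Ioo c d, F x y = 0 → F' x y ≠ 0) :
    IsOpenMap (proj : CurveOver F c d S → S) := by
  refine IsOpenMap.of_nhds_le ?_
  rintro ⟨⟨x₀, y₀⟩, hx₀, hy₀, h0⟩ U hU
  obtain ⟨ε, hε, hinj⟩ := exists_injOn_ball hF' hderiv (hcrit x₀ hx₀ y₀ hy₀ h0)
  obtain ⟨V, hV, hVU⟩ := mem_nhds_subtype _ _ _ |>.1 (mem_map.1 hU)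
  obtain ⟨δ, hδ, hδV⟩ := Metric.mem_nhds_iff.1 hV
  obtain ⟨η, hη, hηcd⟩ := Metric.mem_nhds_iff.1 (Ioo_mem_nhds hy₀.1 hy₀.2)
  obtain ⟨r, hr, hrm⟩ := exists_between (lt_min hε (lt_min hδ hη))
  obtain ⟨hrε, hrδ, hrη⟩ : r < ε ∧ r < δ ∧ r < η := by simpa using hrm
  have hcont : ∀ x, Continuous (F x) := fun x => hF.comp (Continuous.prodMk_right x)
  have hsub : Icc (y₀ - r) (y₀ + r) ⊆ Metric.ball y₀ ε := by
    rw [← Real.closedBall_eq_Icc]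
    exact Metric.closedBall_subset_ball hrε
  have hsign : F x₀ (y₀ - r) * F x₀ (y₀ + r) < 0 := by
    rcases (hcont x₀).continuousOn.strictMonoOn_of_injOn_Icc' (by linarith)
      ((hinj x₀ (Metric.mem_ball_self hε)).mono hsub) with hm | hm
    · have h1 := hm (a := y₀ - r) (b := y₀) ⟨by linarith, by linarith⟩
        ⟨by linarith, by linarith⟩ (by linarith)
      have h2 := hm (a := y₀) (b := y₀ + r) ⟨by linarith, by linarith⟩
        ⟨by linarith, by linarith⟩ (by linarith)
      exact mul_neg_of_neg_of_pos (h1.trans_eq h0) (h0.symm.trans_lt h2)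
    · have h1 := hm (a := y₀ - r) (b := y₀) ⟨by linarith, by linarith⟩
        ⟨by linarith, by linarith⟩ (by linarith)
      have h2 := hm (a := y₀) (b := y₀ + r) ⟨by linarith, by linarith⟩
        ⟨by linarith, by linarith⟩ (by linarith)
      exact mul_neg_of_pos_of_neg (h0.symm.trans_lt h1) (h2.trans_eq h0)
  have hsign_near : ∀ᶠ x in 𝓝 x₀, F x (y₀ - r) * F x (y₀ + r) < 0 :=
    ((hF.comp (Continuous.prodMk_left (y₀ - r))).mul
      (hF.comp (Continuous.prodMk_left (y₀ + r)))).continuousAt.eventually_lt_const hsign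
  have hev : ∀ᶠ x : S in 𝓝 ⟨x₀, hx₀⟩,
      F x (y₀ - r) * F x (y₀ + r) < 0 ∧ (x : ℝ) ∈ Metric.ball x₀ δ :=
    (continuous_subtype_val.tendsto (⟨x₀, hx₀⟩ : S)).eventually
      (hsign_near.and (Metric.ball_mem_nhds x₀ hδ))
  change ∀ᶠ x : S in 𝓝 ⟨x₀, hx₀⟩, x ∈ U
  filter_upwards [hev] with x hx
  have h0mem : (0 : ℝ) ∈ uIcc (F x (y₀ - r)) (F x (y₀ + r)) := by
    rw [mem_uIcc]
    rcases mul_neg_iff.1 hx.1 with h | h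
    · exact Or.inr ⟨h.2.le, h.1.le⟩
    · exact Or.inl ⟨h.1.le, h.2.le⟩
  obtain ⟨y, hy, hy0⟩ := intermediate_value_uIcc (hcont x).continuousOn h0mem
  rw [uIcc_of_le (by linarith), ← Real.closedBall_eq_Icc] at hy
  refine hVU (a := ⟨(x, y), x.2, hηcd (Metric.closedBall_subset_ball hrη hy), hy0⟩) (hδV ?_)
  rw [← ball_prod_same]
  exact ⟨hx.2, Metric.closedBall_subset_ball hrδ hy⟩

theorem compactSpace (hF : Continuous fun p : ℝ × ℝ => F p.1 p.2)
    (hseg : ∀ x ∈ Icc a b, F x c ≠ 0 ∧ F x d ≠ 0) :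
    CompactSpace (CurveOver F c d (Icc a b)) := by
  have hset : {p : ℝ × ℝ | p.1 ∈ Icc a b ∧ p.2 ∈ Ioo c d ∧ F p.1 p.2 = 0} =
      Icc a b ×ˢ Icc c d ∩ {p | F p.1 p.2 = 0} := by
    ext ⟨x, y⟩
    constructor
    · rintro ⟨hx, hy, h0⟩
      exact ⟨⟨hx, Ioo_subset_Icc_self hy⟩, h0⟩
    · rintro ⟨⟨hx, hy⟩, h0⟩
      refine ⟨hx, ⟨lt_of_le_of_ne hy.1 ?_, lt_of_le_of_ne hy.2 ?_⟩, h0⟩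
      · rintro rfl
        exact (hseg x hx).1 h0
      · rintro rfl
        exact (hseg x hx).2 h0
  have hcompact : IsCompact {p : ℝ × ℝ | p.1 ∈ Icc a b ∧ p.2 ∈ Ioo c d ∧ F p.1 p.2 = 0} := by
    rw [hset]
    exact (isCompact_Icc.prod isCompact_Icc).inter_right (isClosed_eq hF continuous_const)
  exact isCompact_iff_compactSpace.1 hcompact

theorem isCoveringMap_proj (hF : Continuous fun p : ℝ × ℝ => F p.1 p.2)
    (hF' : Continuous fun p : ℝ × ℝ => F' p.1 p.2)
    (hderiv : ∀ x y, HasDerivAt (F x) (F' x y) y)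
    (hseg : ∀ x ∈ Icc a b, F x c ≠ 0 ∧ F x d ≠ 0)
    (hcrit : ∀ x ∈ Icc a b, ∀ y ∈ Ioo c d, F x y = 0 → F' x y ≠ 0) :
    IsCoveringMap (proj : CurveOver F c d (Icc a b) → Icc a b) := by
  have := compactSpace hF hseg
  rw [← isLocalHomeomorph_iff_isCoveringMap, isLocalHomeomorph_iff_isOpenEmbedding_restrict]
  intro e
  obtain ⟨U, hU, heU, hinj⟩ := isLocallyInjective_proj hF' hderiv hcrit e
  exact ⟨U, hU.mem_nhds heU, .of_continuous_injective_isOpenMap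
    (continuous_proj.comp continuous_subtype_val) hinj.injective
    ((isOpenMap_proj hF hF' hderiv hcrit).domRestrict hU)⟩

/-- Every point of the curve lies on a branch that is the graph of a continuous function. -/
theorem exists_branch (hab : a ≤ b) (hF : Continuous fun p : ℝ × ℝ => F p.1 p.2)
    (hF' : Continuous fun p : ℝ × ℝ => F' p.1 p.2)
    (hderiv : ∀ x y, HasDerivAt (F x) (F' x y) y)
    (hseg : ∀ x ∈ Icc a b, F x c ≠ 0 ∧ F x d ≠ 0)
    (hcrit : ∀ x ∈ Icc a b, ∀ y ∈ Ioo c d, F x y = 0 → F' x y ≠ 0)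
    {x₀ y₀ : ℝ} (hx₀ : x₀ ∈ Icc a b) (hy₀ : y₀ ∈ Ioo c d) (h0 : F x₀ y₀ = 0) :
    ∃ φ : ℝ → ℝ, Continuous φ ∧ φ x₀ = y₀ ∧
      ∀ x ∈ Icc a b, φ x ∈ Ioo c d ∧ F x (φ x) = 0 := by
  obtain ⟨σ, ⟨hσ₀, hσ⟩, -⟩ :=
    (isCoveringMap_proj hF hF' hderiv hseg hcrit).existsUnique_continuousMap_lifts
      ⟨projIcc a b hab, continuous_projIcc⟩ x₀ ⟨(x₀, y₀), hx₀, hy₀, h0⟩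
      (projIcc_of_mem hab hx₀).symm
  refine ⟨fun x => (σ x).1.2, by fun_prop, by simp [hσ₀], fun x hx => ⟨(σ x).2.2.1, ?_⟩⟩
  have hfst : (σ x).1.1 = x := by
    have h := congrArg Subtype.val (congrFun hσ x)
    simpa [proj, projIcc_of_mem hab hx] using h
  simpa only [hfst] using (σ x).2.2.2

theorem ncard_roots_eq_card_connectedComponents (hab : a ≤ b)
    (hF : Continuous fun p : ℝ × ℝ => F p.1 p.2)
    (hF' : Continuous fun p : ℝ × ℝ => F' p.1 p.2)
    (hderiv : ∀ x y, HasDerivAt (F x) (F' x y) y)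
    (hseg : ∀ x ∈ Icc a b, F x c ≠ 0 ∧ F x d ≠ 0)
    (hcrit : ∀ x ∈ Icc a b, ∀ y ∈ Ioo c d, F x y = 0 → F' x y ≠ 0)
    (hS : S ⊆ Icc a b) (hSconn : IsPreconnected S) {x : ℝ} (hx : x ∈ S) :
    {y ∈ Ioo c d | F x y = 0}.ncard = Nat.card (ConnectedComponents (CurveOver F c d S)) := by
  have := isPreconnected_iff_preconnectedSpace.1 hSconn
  rw [← card_fiber (⟨x, hx⟩ : S)]
  refine Nat.card_fiber_eq_card_connectedComponents continuous_proj
    (isLocallyInjective_proj hF' hderiv fun x hx => hcrit x (hS hx)) ?_ _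
  rintro ⟨⟨x₀, y₀⟩, hx₀, hy₀, h0⟩
  obtain ⟨φ, hφ, hφ₀, hφF⟩ := exists_branch hab hF hF' hderiv hseg hcrit (hS hx₀) hy₀ h0
  refine ⟨fun x => ⟨(x, φ x), x.2, hφF x (hS x.2)⟩, by fun_prop, fun x => rfl, ?_⟩
  exact Subtype.ext (Prod.ext rfl hφ₀)

end CurveOver

/-- Inside a segregating box `[a,b] × [c,d]` with no x-critical point of the
curve `g = 0` in `[a,b] × (c,d)`, the number of roots of `g(a,·)` in `(c,d)`, the number of
roots of `g(b,·)` in `(c,d)`, and the number of connected components of the part of the curve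
in the open box all coincide, and all these roots are simple. -/
theorem branch_count_in_segregating_box
    (g : MvPolynomial (Fin 2) ℝ) (a b c d : ℝ) (hab : a < b) (hcd : c < d)
    (hfiber : ∀ x₀ ∈ Set.Icc a b, ∃ y : ℝ, eval ![x₀, y] g ≠ 0)
    (hseg : ∀ x ∈ Set.Icc a b, eval ![x, c] g ≠ 0 ∧ eval ![x, d] g ≠ 0)
    (hcrit : ∀ x ∈ Set.Icc a b, ∀ y ∈ Set.Ioo c d,
      ¬(eval ![x, y] g = 0 ∧ eval ![x, y] (pderiv 1 g) = 0)) :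
    ({y ∈ Set.Ioo c d | eval ![a, y] g = 0}.ncard
        = {y ∈ Set.Ioo c d | eval ![b, y] g = 0}.ncard ∧
      {y ∈ Set.Ioo c d | eval ![a, y] g = 0}.ncard
        = Nat.card (ConnectedComponents
            {p : ℝ × ℝ // p.1 ∈ Set.Ioo a b ∧ p.2 ∈ Set.Ioo c d ∧ eval ![p.1, p.2] g = 0})) ∧
      (∀ y ∈ Set.Ioo c d, eval ![a, y] g = 0 → eval ![a, y] (pderiv 1 g) ≠ 0) ∧
      (∀ y ∈ Set.Ioo c d, eval ![b, y] g = 0 → eval ![b, y] (pderiv 1 g) ≠ 0) := by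
  have hcont : ∀ p : MvPolynomial (Fin 2) ℝ, Continuous fun q : ℝ × ℝ => eval ![q.1, q.2] p :=
    fun p => (MvPolynomial.continuous_eval p).comp (by fun_prop)
  have hcrit' : ∀ x ∈ Icc a b, ∀ y ∈ Ioo c d,
      eval ![x, y] g = 0 → eval ![x, y] (pderiv 1 g) ≠ 0 :=
    fun x hx y hy h0 h1 => hcrit x hx y hy ⟨h0, h1⟩
  have hcount {S : Set ℝ} (hS : S ⊆ Icc a b) (hSconn : IsPreconnected S) {x : ℝ} (hx : x ∈ S) :=
    CurveOver.ncard_roots_eq_card_connectedComponents (F := fun x y => eval ![x, y] g)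
      (F' := fun x y => eval ![x, y] (pderiv 1 g)) hab.le (hcont g) (hcont _)
      (hasDerivAt_eval_pderiv_one g) hseg hcrit' hS hSconn hx
  have hclosed {x : ℝ} (hx : x ∈ Icc a b) := hcount Subset.rfl isPreconnected_Icc hx
  have ha := left_mem_Icc.2 hab.le
  have hb := right_mem_Icc.2 hab.le
  obtain ⟨m, hm⟩ := exists_between hab
  refine ⟨⟨(hclosed ha).trans (hclosed hb).symm, ?_⟩, hcrit' a ha, hcrit' b hb⟩
  exact ((hclosed ha).trans (hclosed (Ioo_subset_Icc_self hm)).symm).trans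
    (hcount Ioo_subset_Icc_self isPreconnected_Ioo hm)
end

section
/- Let g : ℝ² → ℝ be continuously differentiable and let P ∈ ℝ² with g(P) = 0. If the coordinate function (x,y) ↦ x, restricted to the set {(x,y) ∈ ℝ² : g(x,y) = 0}, attains a local maximum or a local minimum at P, then ∂g/∂y(P) = 0. -/
/-- If `g : ℝ² → ℝ` is `C¹`, `g(P) = 0` and the first coordinate function
restricted to the curve `{g = 0}` attains a local maximum or local minimum at `P`, then
`∂g/∂y (P) = 0`. -/
theorem x_extremal_is_x_critical
    (g : ℝ × ℝ → ℝ) (hg : ContDiff ℝ 1 g) (P : ℝ × ℝ) (hP : g P = 0)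
    (hext : IsLocalMaxOn (fun p : ℝ × ℝ => p.1) {p : ℝ × ℝ | g p = 0} P ∨
            IsLocalMinOn (fun p : ℝ × ℝ => p.1) {p : ℝ × ℝ | g p = 0} P) :
    fderiv ℝ g P (0, 1) = 0 := by
  have hextr : IsLocalExtrOn (fun p : ℝ × ℝ => p.1) {p | g p = g P} P := by
    rw [hP]
    exact hext.symm
  obtain ⟨a, b, hab, h⟩ := hextr.exists_multipliers_of_hasStrictFDerivAt_1d
    (hg.contDiffAt.hasStrictFDerivAt one_ne_zero) hasStrictFDerivAt_fst
  have hx : a * fderiv ℝ g P (1, 0) + b = 0 := by simpa using DFunLike.congr_fun h (1, 0)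
  have hy : a = 0 ∨ fderiv ℝ g P (0, 1) = 0 := by simpa using DFunLike.congr_fun h (0, 1)
  refine hy.resolve_left fun ha => hab ?_
  have hb : b = 0 := by simpa [ha] using hx
  rw [ha, hb, Prod.mk_zero_zero]
end

section
/- Let f ∈ ℝ[x,y,z] and g ∈ ℝ[x,y] be polynomials, and define h = (∂f/∂x)(∂g/∂y) − (∂f/∂y)(∂g/∂x) ∈ ℝ[x,y,z]. Let P = (α,β,γ) ∈ ℝ³ satisfy f(P) = 0 and g(α,β) = 0, and suppose that the vectors ∇f(P) = (f_x(P), f_y(P), f_z(P)) and (g_x(α,β), g_y(α,β), 0) are linearly independent. If P is a z-extremal point of the space curve C = {(x,y,z) ∈ ℝ³ : f(x,y,z) = 0 and g(x,y) = 0}, then h(P) = 0. -/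
open MvPolynomial

/-- The evaluation map of a real multivariate polynomial is strictly differentiable, with
derivative given by the formal partial derivatives. -/
theorem MvPolynomial.hasStrictFDerivAt_eval {σ : Type*} [Fintype σ] (p : MvPolynomial σ ℝ)
    (x : σ → ℝ) :
    HasStrictFDerivAt (fun y : σ → ℝ => eval y p)
      (∑ i, eval x (pderiv i p) • ContinuousLinearMap.proj (R := ℝ) (φ := fun _ : σ => ℝ) i) x := by
  classical
  induction p using MvPolynomial.induction_on with
  | C a => simpa using hasStrictFDerivAt_const a x
  | add p q hp hq =>
    simpa [add_smul, Finset.sum_add_distrib] using hp.fun_add hq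
  | mul_X p j hp =>
    have hj : HasStrictFDerivAt (fun y : σ → ℝ => y j)
        (ContinuousLinearMap.proj (R := ℝ) (φ := fun _ : σ => ℝ) j) x :=
      (ContinuousLinearMap.proj (R := ℝ) (φ := fun _ : σ => ℝ) j).hasStrictFDerivAt
    simp only [map_mul, eval_X]
    refine (hp.fun_mul hj).congr_fderiv ?_
    ext v
    simp [pderiv_X, Pi.single_apply, add_mul, Finset.sum_add_distrib, Finset.mul_sum,
      apply_ite (eval x), mul_assoc]

/-- Let `h = f_x g_y - f_y g_x`.  If `P = (α,β,γ)` lies on the space curve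
`f = 0, g = 0`, the gradients of `f` and of the cylinder `g` at `P` are linearly
independent, and `P` is a `z`-extremal point of the curve, then `h(P) = 0`. -/
theorem z_extremal_of_space_curve_h_vanishes
    (f : MvPolynomial (Fin 3) ℝ) (g : MvPolynomial (Fin 2) ℝ)
    (h : MvPolynomial (Fin 3) ℝ)
    (hh : h = pderiv 0 f * rename Fin.castSucc (pderiv 1 g)
            - pderiv 1 f * rename Fin.castSucc (pderiv 0 g))
    (α β γ : ℝ)
    (hf : eval ![α, β, γ] f = 0) (hg : eval ![α, β] g = 0)
    (hind : LinearIndependent ℝ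
      ![![eval ![α, β, γ] (pderiv 0 f), eval ![α, β, γ] (pderiv 1 f),
          eval ![α, β, γ] (pderiv 2 f)],
        ![eval ![α, β] (pderiv 0 g), eval ![α, β] (pderiv 1 g), 0]])
    (hext : IsLocalMaxOn (fun p : Fin 3 → ℝ => p 2)
              {p : Fin 3 → ℝ | eval p f = 0 ∧ eval ![p 0, p 1] g = 0} ![α, β, γ] ∨
            IsLocalMinOn (fun p : Fin 3 → ℝ => p 2)
              {p : Fin 3 → ℝ | eval p f = 0 ∧ eval ![p 0, p 1] g = 0} ![α, β, γ]) :
    eval ![α, β, γ] h = 0 := by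
  have hres (p : Fin 3 → ℝ) : p ∘ Fin.castSucc = ![p 0, p 1] := by
    ext i; fin_cases i <;> rfl
  have hinj : Function.Injective (Fin.castSucc : Fin 2 → Fin 3) := Fin.castSucc_injective 2
  have hset : {p : Fin 3 → ℝ | eval p f = 0 ∧ eval ![p 0, p 1] g = 0} =
      {p | ∀ i : Fin 2, eval p (![f, rename Fin.castSucc g] i) =
        eval ![α, β, γ] (![f, rename Fin.castSucc g] i)} := by
    ext p
    simp [Fin.forall_fin_two, eval_rename, hres, hf, hg]
  rw [hset] at hext
  obtain ⟨c, d, hcd, hsum⟩ := IsLocalExtrOn.exists_multipliers_of_hasStrictFDerivAt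
    (f := fun (i : Fin 2) (p : Fin 3 → ℝ) => eval p (![f, rename Fin.castSucc g] i))
    hext.symm (fun i => hasStrictFDerivAt_eval _ _)
    (ContinuousLinearMap.proj (R := ℝ) (φ := fun _ : Fin 3 => ℝ) 2).hasStrictFDerivAt
  have hx := DFunLike.congr_fun hsum (Pi.single 0 1)
  have hy := DFunLike.congr_fun hsum (Pi.single 1 1)
  have hz := DFunLike.congr_fun hsum (Pi.single 2 1)
  have hg0 : pderiv 0 (rename Fin.castSucc g) =
      (rename Fin.castSucc (pderiv 0 g) : MvPolynomial (Fin 3) ℝ) := pderiv_rename hinj 0 g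
  have hg1 : pderiv 1 (rename Fin.castSucc g) =
      (rename Fin.castSucc (pderiv 1 g) : MvPolynomial (Fin 3) ℝ) := pderiv_rename hinj 1 g
  simp [Fin.sum_univ_three, hg0, hg1] at hx hy hz
  subst hh
  simp only [map_sub, map_mul]
  by_cases h0 : c 0 = 0
  · by_cases h1 : c 1 = 0
    · refine absurd ?_ hcd
      have hd : d = 0 := by simpa [h0, h1] using hz
      ext i
      · fin_cases i <;> simp [h0, h1]
      · exact hd
    · refine mul_left_cancel₀ h1 ?_
      linear_combination eval ![α, β, γ] (pderiv 0 f) * hy - eval ![α, β, γ] (pderiv 1 f) * hx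
  · refine mul_left_cancel₀ h0 ?_
    linear_combination eval ![α, β, γ] (rename Fin.castSucc (pderiv 1 g)) * hx -
      eval ![α, β, γ] (rename Fin.castSucc (pderiv 0 g)) * hy
end

section
/- Let a < b be real numbers, k ≥ 1 an integer, and let θ₁, …, θ_k and δ₁, …, δ_k be continuous functions from [a,b] to ℝ such that θᵢ(x) < θᵢ₊₁(x) and δᵢ(x) < δᵢ₊₁(x) for all x ∈ (a,b) and all 1 ≤ i < k, and such that θᵢ(a) = δᵢ(a) and θᵢ(b) = δᵢ(b) for all i. Then there exists a continuous map H : ℝ² × [0,1] → ℝ² such that: H(·, 0) is the identity of ℝ²; for each t ∈ [0,1], H(·, t) is a homeomorphism of ℝ² onto itself; H((x,y), t) = (x,y) for all t whenever x ∉ (a,b); and for each i, H(·, 1) maps the graph of δᵢ onto the graph of θᵢ (so H(·,1) maps the union of the graphs of the δᵢ onto the union of the graphs of the θᵢ). -/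
/-- The piecewise linear function of `y` taking the value `d i` at the node `δ i` for `i ≤ n`,
constant outside the range of the nodes. -/
noncomputable def nodeInterp (n : ℕ) (δ d : ℕ → ℝ) (y : ℝ) : ℝ :=
  d 0 + ∑ i ∈ Finset.range n,
    (d (i + 1) - d i) * ((min y (δ (i + 1)) - min y (δ i)) / (δ (i + 1) - δ i))

theorem abs_min_sub_min_div_le_one (y p q : ℝ) : |(min y q - min y p) / (q - p)| ≤ 1 := by
  rw [abs_div]
  refine div_le_one_of_le₀ ?_ (abs_nonneg _)
  simpa using abs_min_sub_min_le_max y q y p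

theorem nodeInterp_succ (n : ℕ) (δ d : ℕ → ℝ) (y : ℝ) :
    nodeInterp (n + 1) δ d y = nodeInterp n δ d y +
      (d (n + 1) - d n) * ((min y (δ (n + 1)) - min y (δ n)) / (δ (n + 1) - δ n)) := by
  simp only [nodeInterp, Finset.sum_range_succ, add_assoc]

theorem nodeInterp_eq_zero (n : ℕ) (δ d : ℕ → ℝ) (hd : ∀ i, d i = 0) (y : ℝ) :
    nodeInterp n δ d y = 0 := by
  simp [nodeInterp, hd]

theorem abs_nodeInterp_le (n : ℕ) (δ d : ℕ → ℝ) (y : ℝ) :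
    |nodeInterp n δ d y| ≤ |d 0| + ∑ i ∈ Finset.range n, |d (i + 1) - d i| := by
  refine (abs_add_le _ _).trans (add_le_add le_rfl ?_)
  refine (Finset.abs_sum_le_sum_abs _ _).trans (Finset.sum_le_sum fun i _ => ?_)
  rw [abs_mul]
  exact mul_le_of_le_one_right (abs_nonneg _) (abs_min_sub_min_div_le_one _ _ _)

/-- Beyond the last node the interpolation is constant. -/
theorem nodeInterp_of_le (n : ℕ) (δ d : ℕ → ℝ) (hδ : ∀ i < n, δ i < δ (i + 1)) (y : ℝ)
    (hy : δ n ≤ y) : nodeInterp n δ d y = d n := by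
  induction n with
  | zero => simp [nodeInterp]
  | succ n ih =>
    have h := hδ n n.lt_succ_self
    rw [nodeInterp_succ, ih (fun i hi => hδ i (hi.trans n.lt_succ_self)) (h.le.trans hy),
      min_eq_right hy, min_eq_right (h.le.trans hy), div_self (sub_pos.2 h).ne']
    ring

/-- Adding a node does not change the interpolation to the left of the previous last node. -/
theorem nodeInterp_succ_of_le (n : ℕ) (δ d : ℕ → ℝ) (hδ : δ n < δ (n + 1)) (y : ℝ)
    (hy : y ≤ δ n) : nodeInterp (n + 1) δ d y = nodeInterp n δ d y := by
  rw [nodeInterp_succ, min_eq_left hy, min_eq_left (hy.trans hδ.le)]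
  simp

theorem nodeInterp_node (n : ℕ) (δ d : ℕ → ℝ) (hδ : ∀ i < n, δ i < δ (i + 1)) (j : ℕ)
    (hj : j ≤ n) : nodeInterp n δ d (δ j) = d j := by
  induction n with
  | zero =>
    obtain rfl : j = 0 := by lia
    exact nodeInterp_of_le 0 δ d hδ _ le_rfl
  | succ n ih =>
    rcases hj.eq_or_lt with rfl | hj
    · exact nodeInterp_of_le _ δ d hδ _ le_rfl
    · have hδ' : ∀ i < n, δ i < δ (i + 1) := fun i hi => hδ i (hi.trans n.lt_succ_self)
      have hjn : δ j ≤ δ n :=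
        (strictMonoOn_of_lt_add_one Set.ordConnected_Iic
          fun i _ _ hi => hδ' i (Nat.lt_of_succ_le hi)).monotoneOn
          (Nat.lt_succ_iff.1 hj) (Set.mem_Iic.2 le_rfl) (Nat.lt_succ_iff.1 hj)
      rw [nodeInterp_succ_of_le n δ d (hδ n n.lt_succ_self) _ hjn,
        ih hδ' (Nat.lt_succ_iff.1 hj)]

/-- Displacing the line by the interpolation is strictly increasing when the displaced nodes stay
in the same order. -/
theorem strictMono_add_nodeInterp (n : ℕ) (δ d : ℕ → ℝ) (hδ : ∀ i < n, δ i < δ (i + 1))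
    (hd : ∀ i < n, δ i + d i < δ (i + 1) + d (i + 1)) :
    StrictMono fun y => y + nodeInterp n δ d y := by
  induction n with
  | zero =>
    intro y z hyz
    simpa [nodeInterp] using hyz
  | succ n ih =>
    have hδ' : ∀ i < n, δ i < δ (i + 1) := fun i hi => hδ i (hi.trans n.lt_succ_self)
    have hn := hδ n n.lt_succ_self
    have hdn := hd n n.lt_succ_self
    refine StrictMonoOn.Iic_union_Ici (a := δ n) (fun y hy z hz hyz => ?_)
      (fun y hy z hz hyz => ?_)
    · simp only [nodeInterp_succ_of_le n δ d hn _ hy, nodeInterp_succ_of_le n δ d hn _ hz]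
      exact ih hδ' (fun i hi => hd i (hi.trans n.lt_succ_self)) hyz
    · rw [Set.mem_Ici] at hy hz
      simp only [nodeInterp_succ, nodeInterp_of_le n δ d hδ' _ hy,
        nodeInterp_of_le n δ d hδ' _ hz, min_eq_right hy, min_eq_right hz]
      have hs : -1 < (d (n + 1) - d n) / (δ (n + 1) - δ n) := by
        rw [lt_div_iff₀ (sub_pos.2 hn)]
        linarith
      have hc : 0 ≤ min z (δ (n + 1)) - min y (δ (n + 1)) :=
        sub_nonneg.2 (min_le_min_right _ hyz.le)
      have hc' : min z (δ (n + 1)) - min y (δ (n + 1)) ≤ z - y := by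
        have h := abs_min_sub_min_le_max z (δ (n + 1)) y (δ (n + 1))
        rw [sub_self, abs_zero, max_eq_left (abs_nonneg _), abs_of_pos (sub_pos.2 hyz)] at h
        exact (le_abs_self _).trans h
      rw [← sub_pos]
      have key : 0 < (z - y) + (d (n + 1) - d n) / (δ (n + 1) - δ n) *
          (min z (δ (n + 1)) - min y (δ (n + 1))) := by
        rcases hc.eq_or_lt with h0 | h0
        · rw [← h0]
          linarith
        · nlinarith
      refine key.trans_eq ?_
      ring

/-- A product of a continuous factor with a bounded difference quotient is continuous, provided
the factor vanishes wherever the quotient degenerates. -/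
theorem continuous_mul_min_sub_min_div (c p q : ℝ → ℝ) (hc : Continuous c) (hp : Continuous p)
    (hq : Continuous q) (hpq : ∀ x, c x ≠ 0 → p x ≠ q x) :
    Continuous fun z : ℝ × ℝ =>
      c z.1 * ((min z.2 (q z.1) - min z.2 (p z.1)) / (q z.1 - p z.1)) := by
  rw [continuous_iff_continuousAt]
  intro z
  by_cases hz : c z.1 = 0
  · have hlim : Filter.Tendsto (fun w : ℝ × ℝ => |c w.1|) (nhds z) (nhds 0) := by
      have h : Continuous fun w : ℝ × ℝ => |c w.1| := by fun_prop
      simpa [hz] using h.tendsto z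
    simp only [ContinuousAt, hz, zero_mul]
    refine squeeze_zero_norm (fun w => ?_) hlim
    rw [Real.norm_eq_abs, abs_mul]
    exact mul_le_of_le_one_right (abs_nonneg _) (abs_min_sub_min_div_le_one _ _ _)
  · refine ContinuousAt.mul (by fun_prop) (ContinuousAt.div (by fun_prop) (by fun_prop) ?_)
    exact sub_ne_zero.2 (hpq _ hz).symm

theorem continuous_nodeInterp (n : ℕ) (δ d : ℕ → ℝ → ℝ) (hδ : ∀ i, Continuous (δ i))
    (hd : ∀ i, Continuous (d i))
    (h : ∀ i < n, ∀ x, d (i + 1) x - d i x ≠ 0 → δ i x ≠ δ (i + 1) x) :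
    Continuous fun z : ℝ × ℝ => nodeInterp n (fun i => δ i z.1) (fun i => d i z.1) z.2 := by
  unfold nodeInterp
  refine ((hd 0).comp continuous_fst).add (continuous_finsetSum _ fun i hi => ?_)
  exact continuous_mul_min_sub_min_div (fun x => d (i + 1) x - d i x) (δ i) (δ (i + 1))
    ((hd _).sub (hd _)) (hδ _) (hδ _) (h i (Finset.mem_range.1 hi))

theorem surjective_of_continuous_of_abs_sub_le (f : ℝ → ℝ) (C : ℝ) (hf : Continuous f)
    (hC : ∀ y, |f y - y| ≤ C) : Function.Surjective f := by
  refine hf.surjective ?_ ?_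
  · exact Filter.tendsto_atTop_mono (fun y => by
      show id y + -C ≤ f y
      linarith [(abs_le.1 (hC y)).1, show id y = y from rfl])
      (Filter.tendsto_atTop_add_const_right _ (-C) Filter.tendsto_id)
  · exact Filter.tendsto_atBot_mono (fun y => by
      show f y ≤ id y + C
      linarith [(abs_le.1 (hC y)).2, show id y = y from rfl])
      (Filter.tendsto_atBot_add_const_right _ C Filter.tendsto_id)

/-- A continuous fibrewise strictly increasing surjection of the plane is a homeomorphism. -/
theorem exists_homeomorph_of_fiberwise_strictMono (f : ℝ × ℝ → ℝ) (hf : Continuous f)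
    (hmono : ∀ x, StrictMono fun y => f (x, y))
    (hsurj : ∀ x, Function.Surjective fun y => f (x, y)) :
    ∃ e : (ℝ × ℝ) ≃ₜ (ℝ × ℝ), ∀ p, e p = (p.1, f p) := by
  choose g hg using fun x z => hsurj x z
  simp only at hg
  have hgf : ∀ x y, g x (f (x, y)) = y := fun x y => (hmono x).injective (hg x (f (x, y)))
  have hgc : Continuous fun p : ℝ × ℝ => g p.1 p.2 := by
    rw [continuous_iff_continuousAt]
    intro p
    refine tendsto_order.2 ⟨fun l hl => ?_, fun u hu => ?_⟩
    · have hlt : f (p.1, l) < p.2 := by simpa [hg] using hmono p.1 hl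
      have hev : ∀ᶠ w : ℝ × ℝ in nhds p, f (w.1, l) < w.2 :=
        (isOpen_lt (by fun_prop) (by fun_prop)).mem_nhds hlt
      filter_upwards [hev] with w hw
      exact (hmono w.1).lt_iff_lt.1 (by simpa [hg] using hw)
    · have hlt : p.2 < f (p.1, u) := by simpa [hg] using hmono p.1 hu
      have hev : ∀ᶠ w : ℝ × ℝ in nhds p, w.2 < f (w.1, u) :=
        (isOpen_lt (by fun_prop) (by fun_prop)).mem_nhds hlt
      filter_upwards [hev] with w hw
      exact (hmono w.1).lt_iff_lt.1 (by simpa [hg] using hw)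
  exact ⟨{ toFun := fun p => (p.1, f p)
           invFun := fun p => (p.1, g p.1 p.2)
           left_inv := fun p => by simp [hgf]
           right_inv := fun p => by simp [hg]
           continuous_toFun := by fun_prop
           continuous_invFun := by fun_prop }, fun p => rfl⟩


/-- Two families of `k` ordered continuous branches over `[a,b]` sharing
the same endpoints are ambient isotopic by an isotopy of `ℝ²` supported over `(a,b)`:
there is a continuous `H : ℝ² × [0,1] → ℝ²` with `H(·,0) = id`, each `H(·,t)` a
homeomorphism, `H` the identity outside the strip `x ∈ (a,b)`, and `H(·,1)` carrying the
graph of each `δᵢ` onto the graph of the corresponding `θᵢ`. -/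
theorem branch_system_ambient_isotopy
    (a b : ℝ) (hab : a < b) (k : ℕ) (hk : 1 ≤ k)
    (θ δ : Fin k → ℝ → ℝ)
    (hθc : ∀ i, ContinuousOn (θ i) (Set.Icc a b))
    (hδc : ∀ i, ContinuousOn (δ i) (Set.Icc a b))
    (hθlt : ∀ x ∈ Set.Ioo a b, ∀ i j : Fin k, i < j → θ i x < θ j x)
    (hδlt : ∀ x ∈ Set.Ioo a b, ∀ i j : Fin k, i < j → δ i x < δ j x)
    (hea : ∀ i, θ i a = δ i a) (heb : ∀ i, θ i b = δ i b) :
    ∃ H : ℝ × ℝ → ℝ → ℝ × ℝ,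
      ContinuousOn (fun q : (ℝ × ℝ) × ℝ => H q.1 q.2) (Set.univ ×ˢ Set.Icc 0 1) ∧
      (∀ p : ℝ × ℝ, H p 0 = p) ∧
      (∀ t ∈ Set.Icc (0 : ℝ) 1, ∃ e : (ℝ × ℝ) ≃ₜ (ℝ × ℝ), ∀ p, e p = H p t) ∧
      (∀ p : ℝ × ℝ, ∀ t ∈ Set.Icc (0 : ℝ) 1, p.1 ∉ Set.Ioo a b → H p t = p) ∧
      (∀ i, (fun p => H p 1) '' {q : ℝ × ℝ | ∃ x ∈ Set.Icc a b, q = (x, δ i x)}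
        = {q : ℝ × ℝ | ∃ x ∈ Set.Icc a b, q = (x, θ i x)}) := by
  obtain ⟨n, rfl⟩ : ∃ n, k = n + 1 := ⟨k - 1, by lia⟩
  set pr : ℝ → ℝ := fun x => (Set.projIcc a b hab.le x : ℝ) with hpr
  have hprc : Continuous pr := continuous_subtype_val.comp continuous_projIcc
  have hprm : ∀ x, pr x ∈ Set.Icc a b := fun x => (Set.projIcc a b hab.le x).2
  have hpr_of_mem : ∀ x ∈ Set.Icc a b, pr x = x := fun x hx => by
    simp [hpr, Set.projIcc_of_mem hab.le hx]
  have hpr_of_notMem : ∀ x, x ∉ Set.Ioo a b → pr x = a ∨ pr x = b := fun x hx => by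
    by_cases hxa : x ≤ a
    · exact Or.inl (by simp [hpr, Set.projIcc_of_le_left hab.le hxa])
    · have hxb : b ≤ x := not_lt.1 fun h => hx ⟨not_le.1 hxa, h⟩
      exact Or.inr (by simp [hpr, Set.projIcc_of_right_le hab.le hxb])
  set Δ : ℕ → ℝ → ℝ := fun i x => δ (Fin.ofNat (n + 1) i) (pr x) with hΔ
  set d : ℕ → ℝ → ℝ := fun i x =>
    θ (Fin.ofNat (n + 1) i) (pr x) - δ (Fin.ofNat (n + 1) i) (pr x) with hd
  have hΔc : ∀ i, Continuous (Δ i) := fun i => (hδc _).comp_continuous hprc hprm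
  have hdc : ∀ i, Continuous (d i) := fun i =>
    ((hθc _).comp_continuous hprc hprm).sub (hΔc i)
  have hd0 : ∀ x, x ∉ Set.Ioo a b → ∀ i, d i x = 0 := fun x hx i => by
    rcases hpr_of_notMem x hx with h | h <;> simp [hd, h, hea, heb]
  have hidx : ∀ i < n, Fin.ofNat (n + 1) i < Fin.ofNat (n + 1) (i + 1) := fun i hi => by
    rw [Fin.lt_def, Fin.val_ofNat, Fin.val_ofNat, Nat.mod_eq_of_lt (by lia),
      Nat.mod_eq_of_lt (by lia)]
    exact i.lt_succ_self
  have hΔlt : ∀ x ∈ Set.Ioo a b, ∀ i < n, Δ i x < Δ (i + 1) x := fun x hx i hi => by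
    simp only [hΔ, hpr_of_mem x (Set.Ioo_subset_Icc_self hx)]
    exact hδlt x hx _ _ (hidx i hi)
  have hΔdlt : ∀ x ∈ Set.Ioo a b, ∀ i < n, Δ i x + d i x < Δ (i + 1) x + d (i + 1) x :=
    fun x hx i hi => by
      simp only [hΔ, hd, hpr_of_mem x (Set.Ioo_subset_Icc_self hx), add_sub_cancel]
      exact hθlt x hx _ _ (hidx i hi)
  set D : ℝ × ℝ → ℝ := fun z => nodeInterp n (fun i => Δ i z.1) (fun i => d i z.1) z.2 with hD
  have hDc : Continuous D := continuous_nodeInterp n Δ d hΔc hdc fun i hi x hx => by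
    by_cases hxm : x ∈ Set.Ioo a b
    · exact (hΔlt x hxm i hi).ne
    · exact absurd (by simp [hd0 x hxm]) hx
  have hD0 : ∀ z : ℝ × ℝ, z.1 ∉ Set.Ioo a b → D z = 0 := fun z hz =>
    nodeInterp_eq_zero n _ _ (hd0 z.1 hz) z.2
  have hDmono : ∀ x, StrictMono fun y => y + D (x, y) := fun x => by
    by_cases hxm : x ∈ Set.Ioo a b
    · exact strictMono_add_nodeInterp n _ _ (hΔlt x hxm) (hΔdlt x hxm)
    · intro y z hyz
      simpa [hD0 (x, _) hxm] using hyz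
  have hDnode : ∀ i, ∀ x ∈ Set.Icc a b, δ i x + D (x, δ i x) = θ i x := fun i x hx => by
    by_cases hxm : x ∈ Set.Ioo a b
    · have h := nodeInterp_node n (fun i => Δ i x) (fun i => d i x) (hΔlt x hxm) i
        (Nat.lt_succ_iff.1 i.2)
      have hi : Fin.ofNat (n + 1) (i : ℕ) = i := Fin.ofNat_val_eq_self i
      simp only [hΔ, hd, hi, hpr_of_mem x hx] at h
      simp only [hD, hΔ, hd, hpr_of_mem x hx, h]
      ring
    · have h := hd0 x hxm i
      simp only [hd, Fin.ofNat_val_eq_self, hpr_of_mem x hx] at h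
      rw [hD0 _ hxm]
      linarith
  refine ⟨fun p t => (p.1, p.2 + t * D p), ?_, fun p => by simp, fun t ht => ?_,
    fun p t _ hp => by simp [hD0 p hp], fun i => ?_⟩
  · exact Continuous.continuousOn (by fun_prop)
  · refine exists_homeomorph_of_fiberwise_strictMono (fun p => p.2 + t * D p) (by fun_prop)
      (fun x y z hyz => ?_) (fun x => ?_)
    · have h := hDmono x hyz
      simp only at h ⊢
      rcases ht.2.eq_or_lt with rfl | ht1
      · simpa using h
      · nlinarith [ht.1, mul_nonneg ht.1 (sub_pos.2 h).le, mul_pos (sub_pos.2 ht1) (sub_pos.2 hyz)]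
    · refine surjective_of_continuous_of_abs_sub_le _
        (|d 0 x| + ∑ i ∈ Finset.range n, |d (i + 1) x - d i x|) (by fun_prop) fun y => ?_
      rw [add_sub_cancel_left, abs_mul, abs_of_nonneg ht.1]
      exact (mul_le_of_le_one_left (abs_nonneg _) ht.2).trans (abs_nodeInterp_le n _ _ y)
  · ext q
    constructor
    · rintro ⟨_, ⟨x, hx, rfl⟩, rfl⟩
      exact ⟨x, hx, by simp [hDnode i x hx]⟩
    · rintro ⟨x, hx, rfl⟩
      exact ⟨_, ⟨x, hx, rfl⟩, by simp [hDnode i x hx]⟩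
end
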